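/- Let d ≥ 4 be an even integer. For smooth compactly supported fields π_{ij,k} : ℝ^d → ℝ that are traceless hook tensors at every point (π_{ij,k} = π_{ji,k}, π_{ij,k} + π_{ik,j} + π_{kj,i} = 0, Σ_i π_{ii,k} = 0), define the action S_conf[π] = ∫_{ℝ^d} [ π_{ij,k} □^{d/2} π_{ij,k} + 2 (∂_m π_{mi,j}) □^{d/2−1} (∂_n π_{ni,j}) + ((d+1)/(d−2)) (∂_m π_{ij,m}) □^{d/2−1} (∂_n π_{ij,n}) + (3/2) (∂_i ∂_j π_{ij,k}) □^{d/2−2} (∂_m ∂_n π_{mn,k}) ] dx, where □ = Σ_i ∂²/∂x_i² is the Euclidean Laplacian and repeated Latin indices are summed from 1 to d. Let ζ_{mn} : ℝ^d → ℝ be smooth compactly supported functions with ζ_{mn} = −ζ_{nm}, and let δπ_{mn,l} := ∂_m ζ_{nl} + ∂_n ζ_{ml} − (1/(d−1))[2δ_{mn} ∂_k ζ_{kl} − δ_{ml} ∂_k ζ_{kn} − δ_{nl} ∂_k ζ_{km}]. Then S_conf[π + δπ] = S_conf[π]. -/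

import Mathlib

/-! The action is the diagonal of a symmetric bilinear form `⟨π, σ⟩ = ∫ π · □^{d/2-2} E(σ)`, where `E`
is obtained by integrating by parts. It therefore suffices that `⟨π, δπ⟩ = 0` for every traceless
hook field `π` (`absAct_var`): since `δπ` is itself a traceless hook field, both the cross term and
the quadratic term in `δπ` then vanish.

With `a = 1/(d-1)`, `c = (d+1)/(d-2)` and the divergence-free vector `V_l = ∂_p ζ_{pl}`, the
expression `E(δπ)_{ij,k}` (`absEL_var`) consists of trace terms, which a traceless `π` annihilates,
of a part antisymmetric in `ij`, which a symmetric `π` annihilates, and of second derivatives of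
`□V`. Using the cyclic identity, the contribution of the latter is a multiple of `∂_i ∂_k □V_j`
paired with `π_{ij,k}`, with coefficient `2 (c (1 - a) - (1 + 2 a))`, which is zero.

All this only uses that the `∂_i` are commuting endomorphisms, skew-adjoint for a symmetric pairing,
so it is carried out for an abstract real vector space `T` and then applied to the space of smooth
compactly supported functions with the `L²` pairing. -/

open MeasureTheory

/-- Partial derivative along the m-th coordinate direction of ℝ^d. -/
noncomputable def pderiv' {d : ℕ} (m : Fin d) (f : EuclideanSpace ℝ (Fin d) → ℝ) :
    EuclideanSpace ℝ (Fin d) → ℝ :=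
  fun x => fderiv ℝ f x (EuclideanSpace.single m 1)

/-- The Euclidean Laplacian □ = Σ_i ∂_i². -/
noncomputable def lap' {d : ℕ} (f : EuclideanSpace ℝ (Fin d) → ℝ) :
    EuclideanSpace ℝ (Fin d) → ℝ :=
  fun x => ∑ i : Fin d, pderiv' i (pderiv' i f) x

/-- The higher-derivative action for conformal hook gauge fields in even
dimension d. -/
noncomputable def Sconf (d : ℕ)
    (π : Fin d → Fin d → Fin d → EuclideanSpace ℝ (Fin d) → ℝ) : ℝ :=
  ∫ x : EuclideanSpace ℝ (Fin d),
    ((∑ i : Fin d, ∑ j : Fin d, ∑ k : Fin d,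
        π i j k x * (lap')^[d / 2] (π i j k) x)
    + 2 * ∑ i : Fin d, ∑ j : Fin d,
        (∑ m : Fin d, pderiv' m (π m i j) x)
          * (lap')^[d / 2 - 1] (fun y => ∑ n : Fin d, pderiv' n (π n i j) y) x
    + (((d : ℝ) + 1) / ((d : ℝ) - 2)) * ∑ i : Fin d, ∑ j : Fin d,
        (∑ m : Fin d, pderiv' m (π i j m) x)
          * (lap')^[d / 2 - 1] (fun y => ∑ n : Fin d, pderiv' n (π i j n) y) x
    + (3 / 2) * ∑ k : Fin d,
        (∑ i : Fin d, ∑ j : Fin d, pderiv' i (pderiv' j (π i j k)) x)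
          * (lap')^[d / 2 - 2]
              (fun y => ∑ m : Fin d, ∑ n : Fin d,
                pderiv' m (pderiv' n (π m n k)) y) x)

/-! ### The action over an abstract space of fields -/

/-- The Laplacian `Σ_i ∂_i²`, with endomorphisms `D i` in the role of the `∂_i`. -/
noncomputable def absLap {T : Type*} [AddCommGroup T] [Module ℝ T] {d : ℕ}
    (D : Fin d → Module.End ℝ T) : Module.End ℝ T := ∑ i, D i * D i

/-- The divergence `V_l = ∂_p ζ_{pl}` of the gauge parameter. -/
noncomputable def absDiv {T : Type*} [AddCommGroup T] [Module ℝ T] {d : ℕ}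
    (D : Fin d → Module.End ℝ T) (ζ : Fin d → Fin d → T) (l : Fin d) : T :=
  ∑ p, D p (ζ p l)

/-- The gauge variation `δπ_{mn,l}`, with the trace coefficient `1/(d-1)` left as a parameter `a`. -/
noncomputable def absVar {T : Type*} [AddCommGroup T] [Module ℝ T] {d : ℕ}
    (D : Fin d → Module.End ℝ T) (a : ℝ) (ζ : Fin d → Fin d → T) (m n l : Fin d) : T :=
  D m (ζ n l) + D n (ζ m l) - a • ((2 * (if m = n then (1 : ℝ) else 0)) • absDiv D ζ l
    - (if m = l then (1 : ℝ) else 0) • absDiv D ζ n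
    - (if n = l then (1 : ℝ) else 0) • absDiv D ζ m)

/-- The polarised action: the bilinear form whose diagonal is `S_conf`, with `□^{d/2-2}` written
as the power `n` and the coefficient `(d+1)/(d-2)` written as `c`. -/
noncomputable def absAct {T : Type*} [AddCommGroup T] [Module ℝ T] {d : ℕ}
    (D : Fin d → Module.End ℝ T) (B : T →ₗ[ℝ] T →ₗ[ℝ] ℝ) (n : ℕ) (c : ℝ)
    (π σ : Fin d → Fin d → Fin d → T) : ℝ :=
  (∑ i, ∑ j, ∑ k, B (π i j k) ((absLap D ^ (n + 2)) (σ i j k)))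
  + 2 * ∑ i, ∑ j, B (∑ m, D m (π m i j)) ((absLap D ^ (n + 1)) (∑ m, D m (σ m i j)))
  + c * ∑ i, ∑ j, B (∑ m, D m (π i j m)) ((absLap D ^ (n + 1)) (∑ m, D m (σ i j m)))
  + (3 / 2) * ∑ k, B (∑ i, ∑ j, D i (D j (π i j k)))
      ((absLap D ^ n) (∑ i, ∑ j, D i (D j (σ i j k))))

/-- The Euler–Lagrange operator of the action, with the common factor `2 □^{d/2-2}` stripped off. -/
noncomputable def absEL {T : Type*} [AddCommGroup T] [Module ℝ T] {d : ℕ}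
    (D : Fin d → Module.End ℝ T) (c : ℝ)
    (σ : Fin d → Fin d → Fin d → T) (i j k : Fin d) : T :=
  absLap D (absLap D (σ i j k))
    - (2 : ℝ) • D i (absLap D (∑ m, D m (σ m j k)))
    - c • D k (absLap D (∑ m, D m (σ i j m)))
    + (3 / 2 : ℝ) • D i (D j (∑ m, ∑ n, D m (D n (σ m n k))))

section Abstract

variable {T : Type*} [AddCommGroup T] [Module ℝ T] {d : ℕ}
  (D : Fin d → Module.End ℝ T) (B : T →ₗ[ℝ] T →ₗ[ℝ] ℝ)

lemma absLap_apply (f : T) : absLap D f = ∑ i, D i (D i f) := by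
  simp [absLap]

lemma absLap_comm (hD : ∀ i j f, D i (D j f) = D j (D i f)) (i : Fin d) (f : T) :
    absLap D (D i f) = D i (absLap D f) := by
  rw [absLap_apply, absLap_apply, map_sum]
  refine Finset.sum_congr rfl fun j _ => ?_
  rw [hD j i f, hD j i]

lemma absLap_pow_comm (hD : ∀ i j f, D i (D j f) = D j (D i f)) (n : ℕ) (i : Fin d) (f : T) :
    (absLap D ^ n) (D i f) = D i ((absLap D ^ n) f) := by
  induction n generalizing f with
  | zero => simp
  | succ n ih => rw [pow_succ, Module.End.mul_apply, Module.End.mul_apply, absLap_comm D hD, ih]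

lemma absLap_adj (hB : ∀ i f g, B (D i f) g = - B f (D i g)) (f g : T) :
    B (absLap D f) g = B f (absLap D g) := by
  simp [absLap_apply, hB]

lemma absLap_pow_adj (hB : ∀ i f g, B (D i f) g = - B f (D i g)) (n : ℕ) (f g : T) :
    B ((absLap D ^ n) f) g = B f ((absLap D ^ n) g) := by
  induction n generalizing g with
  | zero => simp
  | succ n ih =>
    rw [pow_succ', Module.End.mul_apply, absLap_adj D B hB, ih, ← Module.End.mul_apply,
      ← pow_succ, pow_succ']

lemma absAct_symm (hs : ∀ f g, B f g = B g f) (hB : ∀ i f g, B (D i f) g = - B f (D i g))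
    (n : ℕ) (c : ℝ) (π σ : Fin d → Fin d → Fin d → T) :
    absAct D B n c π σ = absAct D B n c σ π := by
  have key : ∀ n f g, B f ((absLap D ^ n) g) = B g ((absLap D ^ n) f) := fun n f g => by
    rw [hs, absLap_pow_adj D B hB]
  unfold absAct
  congr 1
  · congr 1
    · congr 1
      · exact Finset.sum_congr rfl fun i _ => Finset.sum_congr rfl fun j _ =>
          Finset.sum_congr rfl fun k _ => key _ _ _
      · exact congrArg _ (Finset.sum_congr rfl fun i _ => Finset.sum_congr rfl fun j _ => key _ _ _)
    · exact congrArg _ (Finset.sum_congr rfl fun i _ => Finset.sum_congr rfl fun j _ => key _ _ _)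
  · exact congrArg _ (Finset.sum_congr rfl fun i _ => key _ _ _)

lemma absAct_add_left (n : ℕ) (c : ℝ) (π π' σ : Fin d → Fin d → Fin d → T) :
    absAct D B n c (fun i j k => π i j k + π' i j k) σ
      = absAct D B n c π σ + absAct D B n c π' σ := by
  simp only [absAct, map_add, LinearMap.add_apply, Finset.sum_add_distrib, mul_add]
  ring

/-- Integration by parts moves every derivative off the first argument. -/
lemma absAct_eq_EL (hD : ∀ i j f, D i (D j f) = D j (D i f))
    (hB : ∀ i f g, B (D i f) g = - B f (D i g))
    (n : ℕ) (c : ℝ) (π σ : Fin d → Fin d → Fin d → T) :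
    absAct D B n c π σ
      = ∑ i, ∑ j, ∑ k, B (π i j k) ((absLap D ^ n) (absEL D c σ i j k)) := by
  have h2 : ∀ X : Fin d → Fin d → T, ∑ i, ∑ j, B (∑ m, D m (π m i j)) (X i j)
      = - ∑ i, ∑ j, ∑ k, B (π i j k) (D i (X j k)) := by
    intro X
    simp only [map_sum, LinearMap.sum_apply, hB, Finset.sum_neg_distrib]
    congr 1
    rw [Finset.sum_comm_cycle]
  have h3 : ∀ X : Fin d → Fin d → T, ∑ i, ∑ j, B (∑ m, D m (π i j m)) (X i j)
      = - ∑ i, ∑ j, ∑ k, B (π i j k) (D k (X i j)) := by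
    intro X
    simp only [map_sum, LinearMap.sum_apply, hB, Finset.sum_neg_distrib]
  have h4 : ∀ X : Fin d → T, ∑ k, B (∑ i, ∑ j, D i (D j (π i j k))) (X k)
      = ∑ i, ∑ j, ∑ k, B (π i j k) (D i (D j (X k))) := by
    intro X
    simp only [map_sum, LinearMap.sum_apply, hB, neg_neg]
    rw [← Finset.sum_comm_cycle]
    refine Finset.sum_congr rfl fun i _ => Finset.sum_congr rfl fun j _ =>
          Finset.sum_congr rfl fun k _ => by rw [hD]
  unfold absAct
  rw [h2, h3, h4]
  simp only [absEL, map_add, map_sub, map_smul, Finset.sum_add_distrib, Finset.sum_sub_distrib,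
    smul_eq_mul, ← Finset.mul_sum, absLap_pow_comm D hD, pow_succ, Module.End.mul_apply]
  ring

lemma absDiv_div (hD : ∀ i j f, D i (D j f) = D j (D i f)) (ζ : Fin d → Fin d → T)
    (hζ : ∀ m n, ζ m n = - ζ n m) : ∑ l, D l (absDiv D ζ l) = 0 := by
  have h : ∑ l, D l (absDiv D ζ l) = - ∑ l, D l (absDiv D ζ l) := by
    simp only [absDiv, map_sum]
    conv_lhs => rw [Finset.sum_comm]
    rw [← Finset.sum_neg_distrib]
    refine Finset.sum_congr rfl fun i _ => ?_
    rw [← Finset.sum_neg_distrib]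
    refine Finset.sum_congr rfl fun j _ => ?_
    rw [hζ i j, map_neg, map_neg, hD]
  have h2 : (2 : ℝ) • ∑ l, D l (absDiv D ζ l) = 0 := by
    rw [two_smul]; nth_rewrite 1 [h]; exact neg_add_cancel _
  exact (smul_eq_zero.mp h2).resolve_left two_ne_zero

lemma sum_delta_smul (X : Fin d → T) (n : Fin d) :
    ∑ m, (if m = n then (1 : ℝ) else 0) • X m = X n := by
  simp [ite_smul]

lemma sum_delta_smul' (X : Fin d → T) (n : Fin d) :
    ∑ m, (if n = m then (1 : ℝ) else 0) • X m = X n := by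
  simp [ite_smul]

lemma absDiv_left (hD : ∀ i j f, D i (D j f) = D j (D i f)) (a : ℝ) (ζ : Fin d → Fin d → T)
    (hζ : ∀ m n, ζ m n = - ζ n m) (n l : Fin d) :
    ∑ m, D m (absVar D a ζ m n l) = absLap D (ζ n l) + (1 - 2 * a) • D n (absDiv D ζ l)
      + a • D l (absDiv D ζ n) := by
  have h0 := absDiv_div D hD ζ hζ
  have h1 : ∑ m, D m (D n (ζ m l)) = D n (absDiv D ζ l) := by
    rw [absDiv, map_sum]; exact Finset.sum_congr rfl fun i _ => hD _ _ _
  simp only [absVar, map_add, map_sub, map_smul, Finset.sum_add_distrib, Finset.sum_sub_distrib,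
    ← Finset.smul_sum, mul_smul, sum_delta_smul, h0, h1, ← absLap_apply]
  module

lemma absDiv_right (hD : ∀ i j f, D i (D j f) = D j (D i f)) (a : ℝ) (ζ : Fin d → Fin d → T)
    (hζ : ∀ m n, ζ m n = - ζ n m) (m n : Fin d) :
    ∑ l, D l (absVar D a ζ m n l) =
      (a - 1) • (D m (absDiv D ζ n) + D n (absDiv D ζ m)) := by
  have h0 := absDiv_div D hD ζ hζ
  have h1 : ∀ m n, ∑ l, D l (D m (ζ n l)) = - D m (absDiv D ζ n) := by
    intro m n
    rw [absDiv, map_sum, ← Finset.sum_neg_distrib]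
    refine Finset.sum_congr rfl fun i _ => ?_
    rw [hD, hζ n i, map_neg, map_neg]
  simp only [absVar, map_add, map_sub, map_smul, Finset.sum_add_distrib, Finset.sum_sub_distrib,
    ← Finset.smul_sum, mul_smul, sum_delta_smul', h1, h0]
  module

lemma absDiv_double (hD : ∀ i j f, D i (D j f) = D j (D i f)) (a : ℝ) (ζ : Fin d → Fin d → T)
    (hζ : ∀ m n, ζ m n = - ζ n m) (l : Fin d) :
    ∑ m, ∑ n, D m (D n (absVar D a ζ m n l)) = (2 * (1 - a)) • absLap D (absDiv D ζ l) := by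
  have h0 := absDiv_div D hD ζ hζ
  have h1 : ∑ n, D n (absLap D (ζ n l)) = absLap D (absDiv D ζ l) := by
    rw [absDiv, map_sum]; exact Finset.sum_congr rfl fun i _ => (absLap_comm D hD _ _).symm
  have h2 : ∑ n, D n (D l (absDiv D ζ n)) = 0 := by
    rw [← map_zero (D l), ← h0, map_sum]; exact Finset.sum_congr rfl fun i _ => hD _ _ _
  rw [Finset.sum_comm]
  simp only [hD _ _ (absVar D a ζ _ _ _)]
  have h3 : ∀ n, ∑ m, D n (D m (absVar D a ζ m n l)) = D n (∑ m, D m (absVar D a ζ m n l)) :=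
    fun n => (map_sum _ _ _).symm
  simp only [h3, absDiv_left D hD a ζ hζ, map_add, map_smul, Finset.sum_add_distrib,
    ← Finset.smul_sum, h1, h2, ← absLap_apply]
  module

/-- The Euler–Lagrange expression of a gauge variation: trace terms, a part antisymmetric in
the symmetric index pair, and second derivatives of the divergence `V`. -/
lemma absEL_var (hD : ∀ i j f, D i (D j f) = D j (D i f)) (a c : ℝ) (ζ : Fin d → Fin d → T)
    (hζ : ∀ m n, ζ m n = - ζ n m) (i j k : Fin d) :
    absEL D c (absVar D a ζ) i j k =
      (D j (absLap D (absLap D (ζ i k))) - D i (absLap D (absLap D (ζ j k))))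
      + (1 + a) • D i (D j (absLap D (absDiv D ζ k)))
      + (c * (1 - a) - 2 * a) • D i (D k (absLap D (absDiv D ζ j)))
      + (c * (1 - a)) • D j (D k (absLap D (absDiv D ζ i)))
      - (2 * a) • (if i = j then (1 : ℝ) else 0) • absLap D (absLap D (absDiv D ζ k))
      + a • (if i = k then (1 : ℝ) else 0) • absLap D (absLap D (absDiv D ζ j))
      + a • (if j = k then (1 : ℝ) else 0) • absLap D (absLap D (absDiv D ζ i)) := by
  unfold absEL
  rw [absDiv_left D hD a ζ hζ, absDiv_right D hD a ζ hζ, absDiv_double D hD a ζ hζ]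
  simp only [absVar, map_add, map_sub, map_smul, absLap_comm D hD, hD k]
  module

/-- A traceless hook tensor is orthogonal to the Euler–Lagrange expression of a gauge variation.
The relation between `a` and `c` is what fixes the coefficient `(d+1)/(d-2)`. -/
lemma absAct_var (hD : ∀ i j f, D i (D j f) = D j (D i f))
    (hB : ∀ i f g, B (D i f) g = - B f (D i g)) (n : ℕ) (a c : ℝ)
    (hac : c * (1 - a) = 1 + 2 * a)
    (π : Fin d → Fin d → Fin d → T)
    (hsym : ∀ i j k, π i j k = π j i k)
    (hcyc : ∀ i j k, π i j k + π i k j + π k j i = 0)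
    (htr : ∀ k, (∑ i, π i i k) = 0)
    (ζ : Fin d → Fin d → T) (hζ : ∀ m n, ζ m n = - ζ n m) :
    absAct D B n c π (absVar D a ζ) = 0 := by
  have htr' : ∀ k, ∑ i, π i k i = 0 := by
    intro k
    have h : ∑ i, (π i i k + π i k i + π k i i) = 0 :=
      Finset.sum_eq_zero fun i _ => hcyc i i k
    have h' : ∑ i, π k i i = ∑ i, π i k i := Finset.sum_congr rfl fun i _ => hsym _ _ _
    rw [Finset.sum_add_distrib, Finset.sum_add_distrib, htr, zero_add, h', ← two_smul ℝ] at h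
    exact (smul_eq_zero.mp h).resolve_left two_ne_zero
  have sw : ∀ F : Fin d → Fin d → Fin d → T,
      ∑ i, ∑ j, ∑ k, B (π i j k) (F i j k) = ∑ i, ∑ j, ∑ k, B (π i j k) (F j i k) := by
    intro F
    rw [Finset.sum_comm]
    exact Finset.sum_congr rfl fun i _ => Finset.sum_congr rfl fun j _ =>
      Finset.sum_congr rfl fun k _ => by rw [hsym]
  have cy : ∀ F : Fin d → Fin d → Fin d → T,
      ∑ i, ∑ j, ∑ k, B (π i j k) (F i j k) + ∑ i, ∑ j, ∑ k, B (π i j k) (F i k j)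
        + ∑ i, ∑ j, ∑ k, B (π i j k) (F k j i) = 0 := by
    intro F
    have e1 : ∑ i, ∑ j, ∑ k, B (π i j k) (F i k j) = ∑ i, ∑ j, ∑ k, B (π i k j) (F i j k) :=
      Finset.sum_congr rfl fun i _ => Finset.sum_comm
    have e2 : ∑ i, ∑ j, ∑ k, B (π i j k) (F k j i) = ∑ i, ∑ j, ∑ k, B (π k j i) (F i j k) := by
      rw [Finset.sum_comm_cycle]
      refine Finset.sum_congr rfl fun i _ => Finset.sum_comm
    rw [e1, e2]
    simp only [← Finset.sum_add_distrib, ← LinearMap.add_apply, ← map_add, hcyc]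
    simp
  have t1 : ∀ G : Fin d → T, ∑ i, ∑ j, ∑ k,
      B (π i j k) ((if i = j then (1 : ℝ) else 0) • G k) = 0 := by
    intro G
    have : ∀ k, ∑ i, B (π i i k) (G k) = 0 := fun k => by
      rw [← LinearMap.sum_apply, ← map_sum, htr]; simp
    calc _ = ∑ i, ∑ k, B (π i i k) (G k) := Finset.sum_congr rfl fun i _ => by
            rw [Finset.sum_comm]; simp [map_smul, -ite_smul]
      _ = 0 := by rw [Finset.sum_comm]; simp [this]
  have t2 : ∀ G : Fin d → T, ∑ i, ∑ j, ∑ k,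
      B (π i j k) ((if i = k then (1 : ℝ) else 0) • G j) = 0 := by
    intro G
    have : ∀ k, ∑ i, B (π i k i) (G k) = 0 := fun k => by
      rw [← LinearMap.sum_apply, ← map_sum, htr']; simp
    calc _ = ∑ i, ∑ j, B (π i j i) (G j) := by simp [map_smul, -ite_smul]
      _ = 0 := by rw [Finset.sum_comm]; simp [this]
  have t3 : ∀ G : Fin d → T, ∑ i, ∑ j, ∑ k,
      B (π i j k) ((if j = k then (1 : ℝ) else 0) • G i) = 0 := by
    intro G
    rw [sw]; exact t2 G
  set P := absLap D ^ n with hP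
  have s1 := sw fun i j k => P (D j (absLap D (absLap D (ζ i k))))
  have s2 := sw fun i j k => P (D j (D k (absLap D (absDiv D ζ i))))
  have s3 := cy fun i j k => P (D i (D j (absLap D (absDiv D ζ k))))
  have s4 : ∑ i, ∑ j, ∑ k, B (π i j k) (P (D k (D j (absLap D (absDiv D ζ i)))))
      = ∑ i, ∑ j, ∑ k, B (π i j k) (P (D j (D k (absLap D (absDiv D ζ i))))) := by
    simp only [hD]
  rw [absAct_eq_EL D B hD hB]
  simp only [absEL_var D hD a c ζ hζ, map_add, map_sub, map_smul, Finset.sum_add_distrib,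
    Finset.sum_sub_distrib]
  simp only [map_smul, smul_eq_mul, ← Finset.mul_sum] at t1 t2 t3 s1 s2 s3 s4 ⊢
  rw [← hP]
  rw [t1 fun k => P (absLap D (absLap D (absDiv D ζ k))),
    t2 fun k => P (absLap D (absLap D (absDiv D ζ k))),
    t3 fun k => P (absLap D (absLap D (absDiv D ζ k)))]
  rw [s4] at s3
  linear_combination s1 + (1 + a) * s3 + (c * (1 - a) - (1 + a)) * s2
    + 2 * hac * ∑ i, ∑ j, ∑ k, B (π i j k) (P (D i (D k (absLap D (absDiv D ζ j)))))

/-- Gauge invariance of the abstract action. -/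
lemma absAct_invariant (hD : ∀ i j f, D i (D j f) = D j (D i f))
    (hs : ∀ f g, B f g = B g f)
    (hB : ∀ i f g, B (D i f) g = - B f (D i g)) (n : ℕ) (a c : ℝ)
    (hac : c * (1 - a) = 1 + 2 * a) (had : a * (d - 1) = 1)
    (π : Fin d → Fin d → Fin d → T)
    (hsym : ∀ i j k, π i j k = π j i k)
    (hcyc : ∀ i j k, π i j k + π i k j + π k j i = 0)
    (htr : ∀ k, (∑ i, π i i k) = 0)
    (ζ : Fin d → Fin d → T) (hζ : ∀ m n, ζ m n = - ζ n m) :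
    absAct D B n c (fun i j k => π i j k + absVar D a ζ i j k)
      (fun i j k => π i j k + absVar D a ζ i j k) = absAct D B n c π π := by
  have vsym : ∀ i j k, absVar D a ζ i j k = absVar D a ζ j i k := by
    intro i j k
    simp only [absVar, eq_comm (a := i) (b := j)]
    module
  have vcyc : ∀ i j k, absVar D a ζ i j k + absVar D a ζ i k j + absVar D a ζ k j i = 0 := by
    intro i j k
    simp only [absVar, eq_comm (a := k)]
    simp only [hζ j i, hζ k i, hζ k j, map_neg, eq_comm (a := j) (b := i)]
    module
  have vtr : ∀ k, ∑ i, absVar D a ζ i i k = 0 := by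
    intro k
    simp only [absVar, Finset.sum_add_distrib, Finset.sum_sub_distrib, ← Finset.smul_sum,
      if_true, ite_smul, one_smul, zero_smul, Finset.sum_ite_eq', Finset.mem_univ, mul_one,
      Finset.sum_const, Finset.card_univ, Fintype.card_fin]
    rw [← absDiv, ← Nat.cast_smul_eq_nsmul ℝ]
    trans (2 - 2 * (a * (d - 1))) • absDiv D ζ k
    · module
    · simp [had]
  have h1 := absAct_var D B hD hB n a c hac π hsym hcyc htr ζ hζ
  have h2 := absAct_var D B hD hB n a c hac _ vsym vcyc vtr ζ hζ
  rw [absAct_add_left, absAct_symm D B hs hB n c π, absAct_symm D B hs hB n c (absVar D a ζ),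
    absAct_add_left, absAct_add_left, h2, absAct_symm D B hs hB n c (absVar D a ζ), h1]
  ring

end Abstract

/-! ### Test functions on Euclidean space -/

/-- Smooth compactly supported real functions on `ℝ^d`. -/
def testFun (d : ℕ) : Submodule ℝ (EuclideanSpace ℝ (Fin d) → ℝ) where
  carrier := {f | ContDiff ℝ (⊤ : ℕ∞) f ∧ HasCompactSupport f}
  add_mem' hf hg := ⟨hf.1.add hg.1, hf.2.add hg.2⟩
  zero_mem' := ⟨contDiff_const, HasCompactSupport.zero⟩
  smul_mem' c _ hf := ⟨contDiff_const.smul hf.1, hf.2.smul_left (f := fun _ => c)⟩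

lemma testFun_diff {d : ℕ} (f : testFun d) : Differentiable ℝ (f : EuclideanSpace ℝ (Fin d) → ℝ) :=
  f.2.1.differentiable (by simp)

/-- Partial differentiation as an endomorphism of the space of test functions. -/
noncomputable def testD {d : ℕ} (i : Fin d) : Module.End ℝ (testFun d) where
  toFun f := ⟨pderiv' i f, (f.2.1.fderiv_right (m := (⊤ : ℕ∞)) (by simp)).clm_apply contDiff_const,
    f.2.2.fderiv_apply ℝ _⟩
  map_add' f g := by
    ext x
    simp [pderiv', fderiv_add (testFun_diff f x) (testFun_diff g x)]
  map_smul' c f := by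
    ext x
    simp [pderiv', fderiv_const_smul (testFun_diff f x)]

lemma testFun_integrable {d : ℕ} (f g : testFun d) :
    Integrable (fun x => f.1 x * g.1 x) :=
  (f.2.1.continuous.mul g.2.1.continuous).integrable_of_hasCompactSupport f.2.2.mul_right

/-- The `L²` pairing of test functions. -/
noncomputable def testB (d : ℕ) : testFun d →ₗ[ℝ] testFun d →ₗ[ℝ] ℝ :=
  LinearMap.mk₂ ℝ (fun f g => ∫ x, f.1 x * g.1 x)
    (fun f f' g => by
      rw [← integral_add (testFun_integrable f g) (testFun_integrable f' g)]
      simp [add_mul])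
    (fun c f g => by
      rw [smul_eq_mul, ← integral_const_mul]
      simp [mul_assoc])
    (fun f g g' => by
      rw [← integral_add (testFun_integrable f g) (testFun_integrable f g')]
      simp [mul_add])
    (fun c f g => by
      rw [smul_eq_mul, ← integral_const_mul]
      simp [mul_left_comm])

lemma testB_apply {d : ℕ} (f g : testFun d) : testB d f g = ∫ x, f.1 x * g.1 x := rfl

lemma testB_symm {d : ℕ} (f g : testFun d) : testB d f g = testB d g f := by
  simp [testB_apply, mul_comm]

lemma testD_coe {d : ℕ} (i : Fin d) (f : testFun d) : (testD i f).1 = pderiv' i f.1 := rfl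

lemma testB_adj {d : ℕ} (i : Fin d) (f g : testFun d) :
    testB d (testD i f) g = - testB d f (testD i g) := by
  rw [testB_apply, testB_apply, eq_neg_iff_add_eq_zero, ← neg_eq_iff_add_eq_zero]
  exact (integral_mul_fderiv_eq_neg_fderiv_mul_of_integrable
    (testFun_integrable (testD i f) g) (testFun_integrable f (testD i g)) (testFun_integrable f g)
    (fun x _ => testFun_diff f x) (fun x _ => testFun_diff g x)).symm

lemma testD_comm {d : ℕ} (i j : Fin d) (f : testFun d) :
    testD i (testD j f) = testD j (testD i f) := by
  have key : ∀ (i j : Fin d) (x : EuclideanSpace ℝ (Fin d)), pderiv' i (pderiv' j f.1) x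
      = fderiv ℝ (fderiv ℝ f.1) x (EuclideanSpace.single i 1) (EuclideanSpace.single j 1) := by
    intro i j x
    have hd : DifferentiableAt ℝ (fderiv ℝ f.1) x :=
      (f.2.1.fderiv_right (m := (⊤ : ℕ∞)) (by simp)).differentiable (by simp) x
    unfold pderiv'
    rw [fderiv_clm_apply hd (differentiableAt_const _)]
    simp
  ext x
  change pderiv' i (pderiv' j f.1) x = pderiv' j (pderiv' i f.1) x
  rw [key, key]
  exact (f.2.1.contDiffAt.isSymmSndFDerivAt (by
    rw [minSmoothness_of_isRCLikeNormedField]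
    exact WithTop.coe_le_coe.2 (le_top : (2 : ℕ∞) ≤ ⊤))) _ _

lemma lap'_coe {d : ℕ} (f : testFun d) : lap' f.1 = (absLap testD f).1 := by
  ext x
  simp [absLap_apply, lap', testD_coe]

lemma lap'_iterate_coe {d : ℕ} (n : ℕ) (f : testFun d) :
    (lap')^[n] f.1 = ((absLap testD ^ n) f).1 := by
  induction n with
  | zero => rfl
  | succ n ih => rw [Function.iterate_succ_apply', ih, lap'_coe, pow_succ', Module.End.mul_apply]

lemma integral_add_four {d : ℕ} {f g h k : EuclideanSpace ℝ (Fin d) → ℝ} (hf : Integrable f)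
    (hg : Integrable g) (hh : Integrable h) (hk : Integrable k) :
    ∫ x, (f x + g x + h x + k x) = (∫ x, f x) + (∫ x, g x) + (∫ x, h x) + ∫ x, k x := by
  have h1 : Integrable fun x => f x + g x := hf.add hg
  have h2 : Integrable fun x => f x + g x + h x := h1.add hh
  rw [integral_add h2 hk, integral_add h1 hh, integral_add hf hg]

/-- On test functions `S_conf` is the diagonal of the abstract bilinear form; every integrand is
integrable, so the integral of the Lagrangian splits term by term. -/
lemma Sconf_coe (d n : ℕ) (hd : d = 2 * n + 4) (P : Fin d → Fin d → Fin d → testFun d) :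
    Sconf d (fun i j k => (P i j k).1)
      = absAct testD (testB d) n (((d : ℝ) + 1) / ((d : ℝ) - 2)) P P := by
  have e0 : d / 2 = n + 2 := by omega
  have e1 : d / 2 - 1 = n + 1 := by omega
  have e2 : d / 2 - 2 = n := by omega
  have s1 : ∀ i j, (fun y => ∑ m, pderiv' m (P m i j).1 y) = (∑ m, testD m (P m i j)).1 := by
    intro i j; ext y; simp [testD_coe]
  have s2 : ∀ i j, (fun y => ∑ m, pderiv' m (P i j m).1 y) = (∑ m, testD m (P i j m)).1 := by
    intro i j; ext y; simp [testD_coe]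
  have s3 : ∀ k, (fun y => ∑ i, ∑ j, pderiv' i (pderiv' j (P i j k).1) y)
      = (∑ i, ∑ j, testD i (testD j (P i j k))).1 := by
    intro k; ext y; simp [testD_coe]
  have s1' := fun i j y => congrFun (s1 i j) y
  have s2' := fun i j y => congrFun (s2 i j) y
  have s3' := fun k y => congrFun (s3 k) y
  unfold Sconf absAct
  rw [e2, e1, e0]
  simp only [s1, s2, s3, lap'_iterate_coe]
  simp only [s1', s2', s3']
  have I := fun f g : testFun d => testFun_integrable f g
  have I1 : Integrable fun x => ∑ i, ∑ j, ∑ k, (P i j k).1 x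
      * ((absLap testD ^ (n + 2)) (P i j k)).1 x :=
    integrable_finsetSum _ fun i _ => integrable_finsetSum _ fun j _ =>
      integrable_finsetSum _ fun k _ => I _ _
  have I2 : ∀ X Y : Fin d → Fin d → testFun d,
      Integrable fun x => ∑ i, ∑ j, (X i j).1 x * (Y i j).1 x := fun X Y =>
    integrable_finsetSum _ fun i _ => integrable_finsetSum _ fun j _ => I _ _
  have I3 : ∀ X Y : Fin d → testFun d,
      Integrable fun x => ∑ i, (X i).1 x * (Y i).1 x := fun X Y =>
    integrable_finsetSum _ fun i _ => I _ _
  have J2 : ∀ X Y : Fin d → Fin d → testFun d,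
      ∫ x, ∑ i, ∑ j, (X i j).1 x * (Y i j).1 x = ∑ i, ∑ j, testB d (X i j) (Y i j) := by
    intro X Y
    rw [integral_finsetSum _ fun i _ => integrable_finsetSum _ fun j _ => I _ _]
    exact Finset.sum_congr rfl fun i _ => integral_finsetSum _ fun j _ => I _ _
  have J1 : ∀ X Y : Fin d → Fin d → Fin d → testFun d,
      ∫ x, ∑ i, ∑ j, ∑ k, (X i j k).1 x * (Y i j k).1 x
        = ∑ i, ∑ j, ∑ k, testB d (X i j k) (Y i j k) := by
    intro X Y
    rw [integral_finsetSum _ fun i _ => I2 (X i) (Y i)]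
    exact Finset.sum_congr rfl fun i _ => J2 _ _
  have J3 : ∀ X Y : Fin d → testFun d,
      ∫ x, ∑ i, (X i).1 x * (Y i).1 x = ∑ i, testB d (X i) (Y i) := fun X Y =>
    integral_finsetSum _ fun i _ => I _ _
  have A2 := (I2 (fun i j => ∑ m, testD m (P m i j))
    (fun i j => (absLap testD ^ (n + 1)) (∑ m, testD m (P m i j)))).const_mul 2
  have A3 := (I2 (fun i j => ∑ m, testD m (P i j m))
    (fun i j => (absLap testD ^ (n + 1)) (∑ m, testD m (P i j m)))).const_mul
      (((d : ℝ) + 1) / ((d : ℝ) - 2))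
  have A4 := (I3 (fun k => ∑ i, ∑ j, testD i (testD j (P i j k)))
    (fun k => (absLap testD ^ n) (∑ i, ∑ j, testD i (testD j (P i j k))))).const_mul (3 / 2)
  refine (integral_add_four I1 A2 A3 A4).trans ?_
  rw [integral_const_mul, integral_const_mul, integral_const_mul]
  congr 1
  · congr 1
    · congr 1
      · exact J1 P (fun i j k => (absLap testD ^ (n + 2)) (P i j k))
      · exact congrArg _ (J2 (fun i j => ∑ m, testD m (P m i j))
          (fun i j => (absLap testD ^ (n + 1)) (∑ m, testD m (P m i j))))
    · exact congrArg _ (J2 (fun i j => ∑ m, testD m (P i j m))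
        (fun i j => (absLap testD ^ (n + 1)) (∑ m, testD m (P i j m))))
  · exact congrArg _ (J3 (fun k => ∑ i, ∑ j, testD i (testD j (P i j k)))
      (fun k => (absLap testD ^ n) (∑ i, ∑ j, testD i (testD j (P i j k)))))

/- STATEMENT 15: the conformal hook action is invariant under the leftover
boundary gauge transformation with antisymmetric parameter ζ. -/
theorem stmt_15 (d : ℕ) (hd : 4 ≤ d) (hde : Even d)
    (π : Fin d → Fin d → Fin d → EuclideanSpace ℝ (Fin d) → ℝ)
    (hπs : ∀ i j k, ContDiff ℝ (⊤ : ℕ∞) (π i j k))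
    (hπc : ∀ i j k, HasCompactSupport (π i j k))
    (hsym : ∀ i j k x, π i j k x = π j i k x)
    (hcyc : ∀ i j k x, π i j k x + π i k j x + π k j i x = 0)
    (htr : ∀ k x, (∑ i, π i i k x) = 0)
    (ζ : Fin d → Fin d → EuclideanSpace ℝ (Fin d) → ℝ)
    (hζs : ∀ m n, ContDiff ℝ (⊤ : ℕ∞) (ζ m n))
    (hζc : ∀ m n, HasCompactSupport (ζ m n))
    (hζa : ∀ m n x, ζ m n x = - ζ n m x)
    (δπ : Fin d → Fin d → Fin d → EuclideanSpace ℝ (Fin d) → ℝ)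
    (hδπ : ∀ m n l x, δπ m n l x =
      pderiv' m (ζ n l) x + pderiv' n (ζ m l) x
      - (1 / ((d : ℝ) - 1))
        * (2 * (if m = n then (1 : ℝ) else 0)
              * (∑ p : Fin d, pderiv' p (ζ p l) x)
          - (if m = l then (1 : ℝ) else 0)
              * (∑ p : Fin d, pderiv' p (ζ p n) x)
          - (if n = l then (1 : ℝ) else 0)
              * (∑ p : Fin d, pderiv' p (ζ p m) x))) :
    Sconf d (fun i j k x => π i j k x + δπ i j k x) = Sconf d π := by
  obtain ⟨e, he⟩ := hde
  obtain ⟨n, rfl⟩ : ∃ n, e = n + 2 := ⟨e - 2, by omega⟩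
  have hd4 : (4 : ℝ) ≤ d := by exact_mod_cast hd
  have hd1 : (d : ℝ) - 1 ≠ 0 := by linarith
  have hd2 : (d : ℝ) - 2 ≠ 0 := by linarith
  let P : Fin d → Fin d → Fin d → testFun d := fun i j k => ⟨π i j k, hπs i j k, hπc i j k⟩
  let Z : Fin d → Fin d → testFun d := fun m n => ⟨ζ m n, hζs m n, hζc m n⟩
  have hV : ∀ l x, (absDiv testD Z l).1 x = ∑ p, pderiv' p (ζ p l) x := by
    intro l x
    simp [absDiv, testD_coe, Z]
  have hsum : (fun i j k x => π i j k x + δπ i j k x)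
      = fun i j k => (P i j k + absVar testD (1 / ((d : ℝ) - 1)) Z i j k).1 := by
    funext i j k x
    rw [hδπ]
    simp only [absVar, Submodule.coe_add, Submodule.coe_sub, Submodule.coe_smul, Pi.add_apply,
      Pi.sub_apply, Pi.smul_apply, hV, testD_coe, smul_eq_mul]
    rfl
  rw [hsum, Sconf_coe d n (by omega)]
  change _ = Sconf d (fun i j k => (P i j k).1)
  rw [Sconf_coe d n (by omega)]
  refine absAct_invariant testD (testB d) testD_comm testB_symm testB_adj n _ _ ?_ ?_ P
    ?_ ?_ ?_ Z ?_
  · field_simp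
    ring
  · field_simp
  · intro i j k; ext x; exact hsym i j k x
  · intro i j k; ext x; exact hcyc i j k x
  · intro k; ext x; simpa [P] using htr k x
  · intro m n; ext x; exact hζa m n x
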